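/- Let (W_i, Y_i)_{i≥1} be random sequences in ℝ^q × ℝ (indexed by sample size n₁) such that, as n₁ → ∞: (1) the empirical covariance (1/n₁) Σ_i (W_i − W̄₁)(W_i − W̄₁)ᵀ converges in probability to S_X + Σ_ν, where S_X and S_X + Σ_ν are invertible; (2) the empirical cross-covariance (1/n₁) Σ_i (W_i − W̄₁)(Y_i − Ȳ₁) converges in probability to S_X β; (3) W̄₁ converges in probability to a fixed vector X̄₁ and Ȳ₁ converges in probability to α + X̄₁ᵀ β; and (4) W̄₀ converges in probability to a fixed vector X̄₀. Define κ̌ = (S_X + Σ_ν)^{-1} S_X and the adjusted covariates X̌_i = W̄₁ + κ̌ᵀ(W_i − W̄₁), and let (α̌, β̌) minimize Σ_i (Y_i − a − X̌_iᵀ b)² over (a, b). Then β̌ converges in probability to β, and the adjusted OLS estimator Ȳ₁ + (W̄₀ − W̄₁)ᵀ β̌ converges in probability to ψ₀¹ = α + X̄₀ᵀ β. -/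

import Mathlib

/-!
Write `u_i = W_i - W̄₁`, `E` for the empirical covariance, `c` for the empirical cross-covariance
and `κ = (S_X + Σ_ν)⁻¹ S_X`. Since `∑ u_i = 0`, the normal equations of the adjusted regression,
tested in the direction `(-W̄₁ᵀ v, v)` along which the fitted values move by `u_iᵀ κ v`, reduce to
`κᵀ E κ β̌ = κᵀ c`, hence `E κ β̌ = c` because `κ` is invertible (`normal_equations`). With
probability tending to one `det E ≠ 0`, and then `β̌ = κ⁻¹ E⁻¹ c`, a continuous function of `(E, c)`
near the limit `(S_X + Σ_ν, S_X β)`, where its value is `β`.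

The continuous mapping theorem is obtained by expressing convergence in probability to a constant
as ordinary convergence along a filter on `ℕ × Ω` (`inProb`, `tendsto_inProb_iff`). No measurability
is needed, since only monotonicity and subadditivity of the measure enter.
-/

open MeasureTheory Matrix Filter
open scoped BigOperators

/-- The filter on `ℕ × Ω` of the events which hold with probability tending to one: a set `s`
belongs to it when the (outer) probability that `(n, ω) ∉ s` tends to `0` as `n → ∞`. -/
def inProb {Ω : Type*} [MeasurableSpace Ω] (P : Measure Ω) : Filter (ℕ × Ω) where
  sets := {s | Tendsto (fun n => P {ω | (n, ω) ∉ s}) atTop (nhds 0)}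
  univ_sets := by simp
  sets_of_superset := by
    intro s t hs hst
    refine tendsto_of_tendsto_of_tendsto_of_le_of_le tendsto_const_nhds hs (fun _ => zero_le) ?_
    exact fun n => measure_mono fun ω hω hmem => hω (hst hmem)
  inter_sets := by
    intro s t hs ht
    have hst := Tendsto.add hs ht
    rw [add_zero] at hst
    refine tendsto_of_tendsto_of_tendsto_of_le_of_le tendsto_const_nhds hst (fun _ => zero_le) ?_
    intro n
    refine le_trans (measure_mono ?_) (measure_union_le _ _)
    intro ω hω
    by_cases h : (n, ω) ∈ s
    · exact Or.inr fun h' => hω ⟨h, h'⟩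
    · exact Or.inl h

theorem tendsto_inProb_iff {Ω : Type*} [MeasurableSpace Ω] (P : Measure Ω)
    (f : ℕ → Ω → ℝ) (c : ℝ) :
    TendstoInMeasure P f atTop (fun _ => c) ↔
      Tendsto (fun p : ℕ × Ω => f p.1 p.2) (inProb P) (nhds c) := by
  rw [tendstoInMeasure_iff_dist, Metric.tendsto_nhds]
  refine forall₂_congr fun ε hε => ?_
  change _ ↔ Tendsto (fun n => P {ω | ¬ dist (f n ω) c < ε}) atTop (nhds 0)
  simp only [not_lt]

theorem tendsto_mulVec {ι : Type*} {l : Filter ι} {q : ℕ} {M : ι → Matrix (Fin q) (Fin q) ℝ}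
    {v : ι → Fin q → ℝ} {M₀ : Matrix (Fin q) (Fin q) ℝ} {v₀ : Fin q → ℝ}
    (hM : Tendsto M l (nhds M₀)) (hv : Tendsto v l (nhds v₀)) :
    Tendsto (fun i => M i *ᵥ v i) l (nhds (M₀ *ᵥ v₀)) := by
  have hc : Continuous fun z : Matrix (Fin q) (Fin q) ℝ × (Fin q → ℝ) => z.1 *ᵥ z.2 :=
    Continuous.matrix_mulVec continuous_fst continuous_snd
  exact (hc.tendsto (M₀, v₀)).comp (hM.prodMk_nhds hv)

theorem tendsto_dotProduct {ι : Type*} {l : Filter ι} {q : ℕ} {u v : ι → Fin q → ℝ}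
    {u₀ v₀ : Fin q → ℝ} (hu : Tendsto u l (nhds u₀)) (hv : Tendsto v l (nhds v₀)) :
    Tendsto (fun i => u i ⬝ᵥ v i) l (nhds (u₀ ⬝ᵥ v₀)) := by
  have hc : Continuous fun z : (Fin q → ℝ) × (Fin q → ℝ) => z.1 ⬝ᵥ z.2 :=
    Continuous.dotProduct continuous_fst continuous_snd
  exact (hc.tendsto (u₀, v₀)).comp (hu.prodMk_nhds hv)

/-- First-order condition: if the residual vector `r` cannot be shortened by moving along `d`, then
`r` is orthogonal to `d`. -/
theorem sum_mul_eq_zero_of_min (s : Finset ℕ) (r d : ℕ → ℝ)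
    (h : ∀ t : ℝ, ∑ i ∈ s, r i ^ 2 ≤ ∑ i ∈ s, (r i - t * d i) ^ 2) :
    ∑ i ∈ s, r i * d i = 0 := by
  set A := ∑ i ∈ s, r i * d i with hA
  set D := ∑ i ∈ s, d i ^ 2 with hD
  have hD0 : 0 ≤ D := Finset.sum_nonneg fun i _ => sq_nonneg _
  have key : ∀ t : ℝ, 2 * t * A ≤ t ^ 2 * D := by
    intro t
    have e : ∑ i ∈ s, (r i - t * d i) ^ 2 = ∑ i ∈ s, r i ^ 2 - 2 * t * A + t ^ 2 * D := by
      rw [hA, hD, Finset.mul_sum, Finset.mul_sum, ← Finset.sum_sub_distrib,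
        ← Finset.sum_add_distrib]
      exact Finset.sum_congr rfl fun i _ => by ring
    have := h t
    rw [e] at this
    linarith
  have h1 := key (A / (D + 1))
  have hp : 0 < D + 1 := by linarith
  have e1 : 2 * (A / (D + 1)) * A = 2 * A ^ 2 * (D + 1) / (D + 1) ^ 2 := by
    field_simp
  have e2 : (A / (D + 1)) ^ 2 * D = A ^ 2 * D / (D + 1) ^ 2 := by
    field_simp
  rw [e1, e2, div_le_div_iff_of_pos_right (by positivity)] at h1
  have : A ^ 2 ≤ 0 := by nlinarith [mul_nonneg (sq_nonneg A) hD0, sq_nonneg A]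
  exact pow_eq_zero_iff two_ne_zero |>.1 (le_antisymm this (sq_nonneg A))

/-- The normal equations `E κ b = c` for least squares on the covariates `m + κᵀ (w_i - m)`,
where `m` is the mean of the `w_i`; the constant `y₀` by which the outcomes are centred is
arbitrary. -/
theorem normal_equations {q : ℕ} (n : ℕ) (w : ℕ → Fin q → ℝ) (y : ℕ → ℝ) (m : Fin q → ℝ) (y₀ : ℝ)
    (hm : m = (1 / (n : ℝ)) • ∑ i ∈ Finset.range n, w i)
    (κ : Matrix (Fin q) (Fin q) ℝ) (hκ : IsUnit κ.det) (a : ℝ) (b : Fin q → ℝ)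
    (hmin : ∀ (a' : ℝ) (b' : Fin q → ℝ),
      ∑ i ∈ Finset.range n, (y i - a - (m + κᵀ *ᵥ (w i - m)) ⬝ᵥ b) ^ 2
        ≤ ∑ i ∈ Finset.range n, (y i - a' - (m + κᵀ *ᵥ (w i - m)) ⬝ᵥ b') ^ 2) :
    ((1 / (n : ℝ)) • ∑ i ∈ Finset.range n, vecMulVec (w i - m) (w i - m)) *ᵥ (κ *ᵥ b) =
      (1 / (n : ℝ)) • ∑ i ∈ Finset.range n, (y i - y₀) • (w i - m) := by
  have hu : ∑ i ∈ Finset.range n, (w i - m) = 0 := by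
    rcases Nat.eq_zero_or_pos n with rfl | hn
    · simp
    · have : (n : ℝ) ≠ 0 := by positivity
      rw [Finset.sum_sub_distrib, Finset.sum_const, Finset.card_range, hm, ← Nat.cast_smul_eq_nsmul ℝ,
        smul_smul, mul_one_div_cancel this, one_smul, sub_self]
  have hdot : ∀ (u v : Fin q → ℝ), (κᵀ *ᵥ u) ⬝ᵥ v = u ⬝ᵥ (κ *ᵥ v) := by
    intro u v
    rw [mulVec_transpose, dotProduct_mulVec]
  have horth : ∀ v : Fin q → ℝ, ∑ i ∈ Finset.range n,
      (y i - a - (m + κᵀ *ᵥ (w i - m)) ⬝ᵥ b) * ((w i - m) ⬝ᵥ (κ *ᵥ v)) = 0 := by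
    intro v
    refine sum_mul_eq_zero_of_min _ _ _ fun t => ?_
    -- shifting the intercept by `-t * (m ⬝ᵥ v)` cancels the mean part of the covariates
    refine (hmin (a - t * (m ⬝ᵥ v)) (b + t • v)).trans (le_of_eq ?_)
    refine Finset.sum_congr rfl fun i _ => ?_
    rw [dotProduct_add, dotProduct_smul, add_dotProduct _ _ v, hdot _ v, smul_eq_mul]
    ring
  rw [smul_mulVec]
  congr 1
  ext j
  have h := horth (κ⁻¹ *ᵥ Pi.single j 1)
  rw [mulVec_mulVec, mul_nonsing_inv _ hκ, one_mulVec] at h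
  simp only [dotProduct_single, mul_one] at h
  have huj : ∑ i ∈ Finset.range n, (w i - m) j = 0 := by
    rw [← Finset.sum_apply, hu, Pi.zero_apply]
  have hL : ((∑ i ∈ Finset.range n, vecMulVec (w i - m) (w i - m)) *ᵥ (κ *ᵥ b)) j =
      ∑ i ∈ Finset.range n, ((w i - m) ⬝ᵥ (κ *ᵥ b)) * (w i - m) j := by
    rw [Matrix.sum_mulVec, Finset.sum_apply]
    refine Finset.sum_congr rfl fun i _ => ?_
    rw [vecMulVec_mulVec]
    simp [mul_comm]
  rw [hL, Finset.sum_apply]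
  have e : ∑ i ∈ Finset.range n, (y i - a - (m + κᵀ *ᵥ (w i - m)) ⬝ᵥ b) * (w i - m) j =
      ∑ i ∈ Finset.range n, ((y i - y₀) • (w i - m)) j
        - ∑ i ∈ Finset.range n, ((w i - m) ⬝ᵥ (κ *ᵥ b)) * (w i - m) j
        + (y₀ - a - m ⬝ᵥ b) * ∑ i ∈ Finset.range n, (w i - m) j := by
    rw [Finset.mul_sum, ← Finset.sum_sub_distrib, ← Finset.sum_add_distrib]
    refine Finset.sum_congr rfl fun i _ => ?_
    rw [add_dotProduct, hdot, Pi.smul_apply, smul_eq_mul]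
    ring
  rw [e, huj] at h
  linarith

/-- Proposition 8: consistency of regression-calibration-adjusted
OLS without Gaussianity.  Under probability limits of the empirical moments of
the errors-in-variables data, the OLS slope computed on the adjusted covariates
`X̌_i = W̄₁ + κ̌ᵀ(W_i − W̄₁)`, `κ̌ = (S_X + Σ_ν)⁻¹ S_X`, converges in probability
to `β`, and the adjusted OLS estimator `Ȳ₁ + (W̄₀ − W̄₁)ᵀ β̌` converges in
probability to `ψ₀¹ = α + X̄₀ᵀ β`. -/
theorem stmt10 {Ω : Type*} [MeasurableSpace Ω] (P : Measure Ω) [IsProbabilityMeasure P]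
    {q : ℕ} (W : ℕ → Ω → (Fin q → ℝ)) (Y : ℕ → Ω → ℝ)
    (W0bar : ℕ → Ω → (Fin q → ℝ))
    (SX Sν : Matrix (Fin q) (Fin q) ℝ)
    (hSX : IsUnit SX.det) (hSW : IsUnit (SX + Sν).det)
    (α : ℝ) (β : Fin q → ℝ) (X1bar X0bar : Fin q → ℝ)
    -- sample means and empirical moments
    (W1bar : ℕ → Ω → (Fin q → ℝ)) (Y1bar : ℕ → Ω → ℝ)
    (hW1bar : ∀ n ω, W1bar n ω = (1 / (n : ℝ)) • ∑ i ∈ Finset.range n, W i ω)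
    (hY1bar : ∀ n ω, Y1bar n ω = (1 / (n : ℝ)) * ∑ i ∈ Finset.range n, Y i ω)
    (empCov : ℕ → Ω → Matrix (Fin q) (Fin q) ℝ)
    (hempCov : ∀ n ω, empCov n ω = (1 / (n : ℝ)) •
      ∑ i ∈ Finset.range n, vecMulVec (W i ω - W1bar n ω) (W i ω - W1bar n ω))
    (empCross : ℕ → Ω → (Fin q → ℝ))
    (hempCross : ∀ n ω, empCross n ω = (1 / (n : ℝ)) •
      ∑ i ∈ Finset.range n, (Y i ω - Y1bar n ω) • (W i ω - W1bar n ω))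
    -- hypotheses (1)-(4): convergence in probability of the empirical moments
    (h1 : ∀ j k, TendstoInMeasure P (fun n ω => empCov n ω j k) atTop
      (fun _ => (SX + Sν) j k))
    (h2 : ∀ j, TendstoInMeasure P (fun n ω => empCross n ω j) atTop
      (fun _ => (SX *ᵥ β) j))
    (h3W : ∀ j, TendstoInMeasure P (fun n ω => W1bar n ω j) atTop (fun _ => X1bar j))
    (h3Y : TendstoInMeasure P (fun n ω => Y1bar n ω) atTop (fun _ => α + X1bar ⬝ᵥ β))
    (h4 : ∀ j, TendstoInMeasure P (fun n ω => W0bar n ω j) atTop (fun _ => X0bar j))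
    -- the adjusted covariates, with κ̌ = (S_X + Σ_ν)⁻¹ S_X
    (Xc : ℕ → ℕ → Ω → (Fin q → ℝ))
    (hXc : ∀ n i ω, Xc n i ω =
      W1bar n ω + ((SX + Sν)⁻¹ * SX)ᵀ *ᵥ (W i ω - W1bar n ω))
    -- the adjusted OLS coefficients: minimizers of the least-squares criterion
    (αc : ℕ → Ω → ℝ) (βc : ℕ → Ω → (Fin q → ℝ))
    (hmin : ∀ n ω, ∀ (a : ℝ) (b : Fin q → ℝ),
      ∑ i ∈ Finset.range n, (Y i ω - αc n ω - Xc n i ω ⬝ᵥ βc n ω) ^ 2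
        ≤ ∑ i ∈ Finset.range n, (Y i ω - a - Xc n i ω ⬝ᵥ b) ^ 2) :
    (∀ j, TendstoInMeasure P (fun n ω => βc n ω j) atTop (fun _ => β j)) ∧
    TendstoInMeasure P
      (fun n ω => Y1bar n ω + (W0bar n ω - W1bar n ω) ⬝ᵥ βc n ω) atTop
      (fun _ => α + X0bar ⬝ᵥ β) := by
  obtain ⟨κ, hκdef⟩ : ∃ κ, κ = (SX + Sν)⁻¹ * SX := ⟨_, rfl⟩
  have hκ : IsUnit κ.det := by
    rw [hκdef, det_mul]
    exact ((isUnit_nonsing_inv_det_iff).2 hSW).mul hSX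
  have hnormal : ∀ n ω, empCov n ω *ᵥ (κ *ᵥ βc n ω) = empCross n ω := by
    intro n ω
    have hmin' := hmin n ω
    simp only [hXc, ← hκdef] at hmin'
    have h := normal_equations n (fun i => W i ω) (fun i => Y i ω) (W1bar n ω) (Y1bar n ω)
      (hW1bar n ω) κ hκ (αc n ω) (βc n ω) hmin'
    rw [hempCov, hempCross]
    exact h
  simp only [tendsto_inProb_iff] at h1 h2 h3W h3Y h4 ⊢
  have hE : Tendsto (fun p : ℕ × Ω => empCov p.1 p.2) (inProb P) (nhds (SX + Sν)) :=
    tendsto_pi_nhds.2 fun j => tendsto_pi_nhds.2 fun k => h1 j k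
  have hC : Tendsto (fun p : ℕ × Ω => empCross p.1 p.2) (inProb P) (nhds (SX *ᵥ β)) :=
    tendsto_pi_nhds.2 h2
  have hW : Tendsto (fun p : ℕ × Ω => W1bar p.1 p.2) (inProb P) (nhds X1bar) :=
    tendsto_pi_nhds.2 h3W
  have hW0 : Tendsto (fun p : ℕ × Ω => W0bar p.1 p.2) (inProb P) (nhds X0bar) :=
    tendsto_pi_nhds.2 h4
  have hdet : Tendsto (fun p : ℕ × Ω => (empCov p.1 p.2).det) (inProb P) (nhds (SX + Sν).det) :=
    ((Continuous.matrix_det continuous_id :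
      Continuous fun M : Matrix (Fin q) (Fin q) ℝ => M.det).tendsto (SX + Sν)).comp hE
  have hdet0 : (SX + Sν).det ≠ 0 := hSW.ne_zero
  have hadj : Tendsto (fun p : ℕ × Ω => (empCov p.1 p.2).adjugate) (inProb P)
      (nhds (SX + Sν).adjugate) :=
    ((Continuous.matrix_adjugate continuous_id :
      Continuous fun M : Matrix (Fin q) (Fin q) ℝ => M.adjugate).tendsto (SX + Sν)).comp hE
  have hmul : Tendsto (fun p : ℕ × Ω => (empCov p.1 p.2).adjugate *ᵥ empCross p.1 p.2) (inProb P)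
      (nhds ((SX + Sν).adjugate *ᵥ (SX *ᵥ β))) :=
    tendsto_mulVec hadj hC
  -- Cramer: `M⁻¹ v = (det M)⁻¹ • (adj M) v`
  have hcramer : ∀ (M : Matrix (Fin q) (Fin q) ℝ) (b v : Fin q → ℝ), M.det ≠ 0 →
      M *ᵥ (κ *ᵥ b) = v → κ⁻¹ *ᵥ (M.det⁻¹ • (M.adjugate *ᵥ v)) = b := by
    rintro M b v hM rfl
    rw [mulVec_mulVec (κ *ᵥ b), adjugate_mul, smul_mulVec, one_mulVec, smul_smul,
      inv_mul_cancel₀ hM, one_smul, mulVec_mulVec, nonsing_inv_mul _ hκ, one_mulVec]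
  have hlim : κ⁻¹ *ᵥ ((SX + Sν).det⁻¹ • ((SX + Sν).adjugate *ᵥ (SX *ᵥ β))) = β := by
    refine hcramer (SX + Sν) β (SX *ᵥ β) hdet0 ?_
    rw [mulVec_mulVec, hκdef, mul_nonsing_inv_cancel_left _ _ hSW]
  have hβ : Tendsto (fun p : ℕ × Ω => βc p.1 p.2) (inProb P) (nhds β) := by
    have hκ' : Tendsto (fun _ : ℕ × Ω => κ⁻¹) (inProb P) (nhds κ⁻¹) := tendsto_const_nhds
    have h := tendsto_mulVec hκ' ((hdet.inv₀ hdet0).smul hmul)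
    rw [hlim] at h
    refine h.congr' ?_
    filter_upwards [hdet.eventually_ne hdet0] with p hp
    exact hcramer (empCov p.1 p.2) (βc p.1 p.2) (empCross p.1 p.2) hp (hnormal p.1 p.2)
  refine ⟨tendsto_pi_nhds.1 hβ, ?_⟩
  have hfin : Tendsto (fun p : ℕ × Ω => (W0bar p.1 p.2 - W1bar p.1 p.2) ⬝ᵥ βc p.1 p.2) (inProb P)
      (nhds ((X0bar - X1bar) ⬝ᵥ β)) :=
    tendsto_dotProduct (hW0.sub hW) hβ
  have h := h3Y.add hfin
  have e : α + X1bar ⬝ᵥ β + (X0bar - X1bar) ⬝ᵥ β = α + X0bar ⬝ᵥ β := by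
    rw [sub_dotProduct]
    ring
  rwa [e] at h
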